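/- Let R be a local complete intersection, let M be a totally reflexive finitely generated R-module, and let N be a finitely generated R-module. Then Ext^i_R(Tr M, N) = 0 for all i ≥ 1 if and only if Tor_i^R(M,N) = 0 for all i ≥ 1. -/

import Mathlib

/-!
Both vanishing conditions concern one complex. Extend the given presentation to a free resolution
of `M` and splice it with the dual of a free resolution of `M* = Hom(M, R)`; total reflexivity
makes the result an acyclic complex `T` of finite free modules, indexed by `ℤ`. The homology of
`T ⊗ N` in degree `i ≥ 1` is `Tor_i(M, N)`. The dual of the part of `T` in degrees `≤ 1` is a free
resolution of `Tr M`, and `Hom(P, N) = P* ⊗ N` for `P` finite free, so the homology of `T ⊗ N` in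
degree `1 - i` is `Ext^i(Tr M, N)` for `i ≥ 1`.

It remains to see that over a complete intersection the vanishing of the homology of `T ⊗ N` on
one side forces it everywhere (`Rigid`). Over a regular local ring `T` stays acyclic modulo a
regular system of parameters, hence modulo the maximal ideal, so it is contractible
(`rigid_of_isRegularLocal`). To pass from a ring `S` to `S/x`, with `x` a nonzerodivisor in the
maximal ideal, lift the differential of `T` to `Ã` over `S` and write `Ã² = x χ`. The matrices
`(Ã, x; -χ, -Ã)` are the differential of a complex over `S`, acyclic by Nakayama, whose tensor
product with an `S/x`-module `N` is an extension of two shifted copies of `T ⊗ N` with connecting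
map `χ` of degree `-2`. If the homology of `T ⊗ N` vanishes on one side, so does that of the
extension, which is therefore acyclic by rigidity of `S`; then `χ` is bijective on homology and
the vanishing propagates (`Rigid.quotient`).

Complexes of finite free modules are encoded by matrices, a matrix acting on tuples of elements of
`N` through `act`. `Tor` is computed in Mathlib by resolving the second variable, so a balancing
argument (`tor_iff_rTensor`) is needed as well.
-/

open CategoryTheory TensorProduct

/-- The Ext group `Ext^i_R(M,N)` as a type. -/
noncomputable def ExtM (R : Type) [CommRing R] (M N : Type) [AddCommGroup M] [Module R M]
    [AddCommGroup N] [Module R N] (i : ℕ) : Type :=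
  ((Ext R (ModuleCat R) i).obj (Opposite.op (ModuleCat.of R M))).obj (ModuleCat.of R N)


noncomputable instance (R : Type) [CommRing R] (M N : Type) [AddCommGroup M] [Module R M]
    [AddCommGroup N] [Module R N] (i : ℕ) : AddCommGroup (ExtM R M N i) :=
  inferInstanceAs (AddCommGroup
    (((Ext R (ModuleCat R) i).obj (Opposite.op (ModuleCat.of R M))).obj (ModuleCat.of R N)))

noncomputable instance (R : Type) [CommRing R] (M N : Type) [AddCommGroup M] [Module R M]
    [AddCommGroup N] [Module R N] (i : ℕ) : Module R (ExtM R M N i) :=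
  inferInstanceAs (Module R
    (((Ext R (ModuleCat R) i).obj (Opposite.op (ModuleCat.of R M))).obj (ModuleCat.of R N)))

/-- The Tor group `Tor_i^R(M,N)` as a type. -/
noncomputable def TorM (R : Type) [CommRing R] (M N : Type) [AddCommGroup M] [Module R M]
    [AddCommGroup N] [Module R N] (i : ℕ) : Type :=
  ((Tor (ModuleCat R) i).obj (ModuleCat.of R M)).obj (ModuleCat.of R N)

noncomputable instance (R : Type) [CommRing R] (M N : Type) [AddCommGroup M] [Module R M]
    [AddCommGroup N] [Module R N] (i : ℕ) : AddCommGroup (TorM R M N i) :=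
  inferInstanceAs (AddCommGroup
    (((Tor (ModuleCat R) i).obj (ModuleCat.of R M)).obj (ModuleCat.of R N)))

noncomputable instance (R : Type) [CommRing R] (M N : Type) [AddCommGroup M] [Module R M]
    [AddCommGroup N] [Module R N] (i : ℕ) : Module R (TorM R M N i) :=
  inferInstanceAs (Module R
    (((Tor (ModuleCat R) i).obj (ModuleCat.of R M)).obj (ModuleCat.of R N)))

/-- The depth of a module over a local ring, via Rees' theorem:
`depth M = inf { i | Ext^i(k, M) ≠ 0 }` (so the zero module has depth `⊤`). -/
noncomputable def depthM (R : Type) [CommRing R] [IsLocalRing R] (M : Type) [AddCommGroup M]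
    [Module R M] : ℕ∞ :=
  sInf {i : ℕ∞ | ∃ n : ℕ, i = n ∧ ¬ Subsingleton (ExtM R (IsLocalRing.ResidueField R) M n)}

/-- A maximal Cohen-Macaulay module: a nonzero finitely generated module whose
depth equals the Krull dimension of the ring. -/
def IsMCM (R : Type) [CommRing R] [IsLocalRing R] (M : Type) [AddCommGroup M] [Module R M] :
    Prop :=
  Nontrivial M ∧ Module.Finite R M ∧ (depthM R M : WithBot ℕ∞) = ringKrullDim R

/-- A regular local ring: a Noetherian local ring whose maximal ideal is generated by a
regular sequence. -/
def IsRegularLocal (S : Type) [CommRing S] [IsLocalRing S] : Prop :=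
  IsNoetherianRing S ∧ ∃ xs : List S, RingTheory.Sequence.IsRegular S xs ∧
    Ideal.span {x | x ∈ xs} = IsLocalRing.maximalIdeal S

/-- A finitely generated module is totally reflexive if the biduality map is an isomorphism
and `Ext^i(M,R) = 0 = Ext^i(M^*,R)` for all `i ≥ 1`. -/
def IsTotallyReflexive (R : Type) [CommRing R] (M : Type) [AddCommGroup M] [Module R M] :
    Prop :=
  Function.Bijective (Module.Dual.eval R M) ∧
    (∀ i : ℕ, 1 ≤ i → Subsingleton (ExtM R M R i)) ∧
    (∀ i : ℕ, 1 ≤ i → Subsingleton (ExtM R (Module.Dual R M) R i))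

namespace CIRigid

/-! ### Matrices acting on tuples of module elements -/

section Act

variable {R : Type*} [CommRing R] {N L : Type*} [AddCommGroup N] [Module R N]
  [AddCommGroup L] [Module R L] {m n p q : Type*}

/-- A matrix `A : Rⁿ → Rᵐ` acting on `Rⁿ ⊗ N = Nⁿ`: the map `A ⊗ N : Nⁿ → Nᵐ`. -/
noncomputable def act [Fintype n] (A : Matrix m n R) : (n → N) →ₗ[R] (m → N) :=
  LinearMap.pi fun i => ∑ j, A i j • LinearMap.proj j

theorem act_apply [Fintype n] (A : Matrix m n R) (v : n → N) (i : m) :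
    act A v i = ∑ j, A i j • v j := by
  simp [act]

theorem act_mul [Fintype n] [Fintype p] (A : Matrix m n R) (B : Matrix n p R) (v : p → N) :
    act (A * B) v = act A (act B v) := by
  ext i
  simp only [act_apply, Matrix.mul_apply, Finset.sum_smul, Finset.smul_sum, mul_smul]
  exact Finset.sum_comm

theorem act_one [Fintype n] [DecidableEq n] (v : n → N) : act (1 : Matrix n n R) v = v := by
  ext i
  simp [act_apply, Matrix.one_apply]

theorem act_zero [Fintype n] (v : n → N) : act (0 : Matrix m n R) v = 0 := by
  ext i
  simp [act_apply]

theorem act_add [Fintype n] (A B : Matrix m n R) (v : n → N) :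
    act (A + B) v = act A v + act B v := by
  ext i
  simp [act_apply, add_smul, Finset.sum_add_distrib]

theorem act_neg [Fintype n] (A : Matrix m n R) (v : n → N) :
    act (-A) v = -act A v := by
  ext i
  simp [act_apply]

theorem act_smul [Fintype n] (r : R) (A : Matrix m n R) (v : n → N) :
    act (r • A) v = r • act A v := by
  ext i
  simp [act_apply, Finset.smul_sum, mul_smul]

theorem act_comp [Fintype n] (A : Matrix m n R) (f : N →ₗ[R] L) (v : n → N) :
    act A (f ∘ v) = f ∘ act A v := by
  ext i
  simp [act_apply]

theorem act_fromBlocks [Fintype n] [Fintype q] (A : Matrix m n R) (B : Matrix m q R)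
    (C : Matrix p n R) (D : Matrix p q R) (v : n → N) (w : q → N) :
    act (Matrix.fromBlocks A B C D) (Sum.elim v w) =
      Sum.elim (act A v + act B w) (act C v + act D w) := by
  ext i
  rcases i with i | i <;> simp [act_apply]

theorem act_toMatrix' [Fintype n] [DecidableEq n] (f : (n → R) →ₗ[R] (m → R)) (v : n → R) :
    act (LinearMap.toMatrix' f) v = f v := by
  ext i
  rw [act_apply]
  conv_rhs => rw [← LinearMap.toMatrix'_mulVec f v]
  rfl

theorem act_map {S : Type*} [CommRing S] [Algebra S R] [Module S N] [IsScalarTower S R N]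
    [Fintype n] (A : Matrix m n S) (v : n → N) :
    act (A.map (algebraMap S R)) v = act A v := by
  ext i
  simp [act_apply]

end Act

/-! ### Acyclic complexes of finite free modules -/

section Rigid

/-- Let `A i : T_{i+1} → T_i` be the differentials of a complex of finite free modules
`T_i = R^(ι i)`. `Ex A N i` says that `T ⊗ N` is exact at `T_{i+1} ⊗ N`. -/
def Ex {R : Type} [CommRing R] {ι : ℤ → Type} [∀ i, Fintype (ι i)]
    (A : ∀ i, Matrix (ι i) (ι (i + 1)) R) (N : Type) [AddCommGroup N] [Module R N] (i : ℤ) :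
    Prop :=
  ∀ v : ι (i + 1) → N, act (A i) v = 0 → ∃ w, act (A (i + 1)) w = v

/-- The rigidity property: for an acyclic complex `T` of finite free `R`-modules and any
module `N`, exactness of `T ⊗ N` far out in one of the two directions implies exactness
everywhere. -/
def Rigid (R : Type) [CommRing R] : Prop :=
  ∀ (ι : ℤ → Type) [∀ i, Fintype (ι i)] (A : ∀ i, Matrix (ι i) (ι (i + 1)) R),
    (∀ i, A i * A (i + 1) = 0) → (∀ i, Ex A R i) →
    ∀ (N : Type) [AddCommGroup N] [Module R N] (i₀ : ℤ),
      ((∀ i, i₀ ≤ i → Ex A N i) → ∀ i, Ex A N i) ∧ ((∀ i, i ≤ i₀ → Ex A N i) → ∀ i, Ex A N i)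

variable {S : Type} [CommRing S] {ι : ℤ → Type} [∀ i, Fintype (ι i)]

/-- If `T ⊗ L` is acyclic and `y` is a nonzerodivisor on `L`, then `T ⊗ L/yL` is acyclic. -/
theorem ex_quotient {A : ∀ i, Matrix (ι i) (ι (i + 1)) S} (hA : ∀ i, A i * A (i + 1) = 0)
    {L L' : Type} [AddCommGroup L] [Module S L] [AddCommGroup L'] [Module S L']
    (f : L →ₗ[S] L') (hf : Function.Surjective f) (y : S) (hy : IsSMulRegular L y)
    (hker : ∀ l, f l = 0 → ∃ l', l = y • l') (hyf : ∀ l, f (y • l) = 0)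
    (h : ∀ i, Ex A L i) (i : ℤ) : Ex A L' i := by
  obtain ⟨i, rfl⟩ : ∃ j, i = j + 1 := ⟨i - 1, by ring⟩
  intro v hv
  obtain ⟨v, rfl⟩ := hf.comp_left v
  change act (A (i + 1)) (f ∘ v) = 0 at hv
  rw [act_comp] at hv
  choose u hu using fun j => hker (act (A (i + 1)) v j) (congrFun hv j)
  have hu' : act (A (i + 1)) v = y • u := funext hu
  have h0 : act (A i) u = 0 := by
    have : y • act (A i) u = 0 := by
      rw [← map_smul, ← hu', ← act_mul, hA, act_zero]
    ext j
    exact hy (by simpa using congrFun this j)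
  obtain ⟨w, rfl⟩ := h i u h0
  obtain ⟨z, hz⟩ := h (i + 1) (v - y • w) (by rw [map_sub, map_smul, hu', sub_self])
  refine ⟨f ∘ z, ?_⟩
  rw [act_comp, hz]
  ext j
  simp [hyf]

/-- The Eisenbud construction: if `Ã` lifts the differentials of a complex `T` over `S/x` and
`Ã² = x χ`, these are the differentials of a complex over `S` with terms `T̃_{i+1} ⊕ T̃_i`. -/
def cone (x : S) (A : ∀ i, Matrix (ι i) (ι (i + 1)) S)
    (χ : ∀ i, Matrix (ι i) (ι (i + 1 + 1)) S) [∀ i, DecidableEq (ι i)] (i : ℤ) :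
    Matrix (ι (i + 1) ⊕ ι i) (ι (i + 1 + 1) ⊕ ι (i + 1)) S :=
  Matrix.fromBlocks (A (i + 1)) (x • 1) (-χ i) (-A i)

section Cone

variable [∀ i, DecidableEq (ι i)] {x : S} {A : ∀ i, Matrix (ι i) (ι (i + 1)) S}
  {χ : ∀ i, Matrix (ι i) (ι (i + 1 + 1)) S}

omit [∀ i, DecidableEq (ι i)] in
theorem cone_comm (hx : ∀ s, x * s = 0 → s = 0) (h : ∀ i, A i * A (i + 1) = x • χ i) (i : ℤ) :
    A i * χ (i + 1) = χ i * A (i + 1 + 1) := by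
  have : x • (A i * χ (i + 1)) = x • (χ i * A (i + 1 + 1)) := by
    rw [← Matrix.mul_smul, ← Matrix.smul_mul, ← h, ← h, Matrix.mul_assoc]
  ext a b
  rw [← sub_eq_zero]
  apply hx
  have := congrFun (congrFun this a) b
  simp only [Matrix.smul_apply, smul_eq_mul] at this
  rw [mul_sub, this, sub_self]

theorem cone_mul (hx : ∀ s, x * s = 0 → s = 0) (h : ∀ i, A i * A (i + 1) = x • χ i) (i : ℤ) :
    cone x A χ i * cone x A χ (i + 1) = 0 := by
  unfold cone
  rw [Matrix.fromBlocks_multiply, h, ← Matrix.fromBlocks_zero]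
  congr 1
  · simp
  · simp
  · simp [cone_comm hx h]
  · simp [h]

variable {N : Type} [AddCommGroup N] [Module S N]

theorem act_cone (hN : ∀ n : N, x • n = 0) (i : ℤ) (a : ι (i + 1 + 1) → N) (b : ι (i + 1) → N) :
    act (cone x A χ i) (Sum.elim a b) =
      Sum.elim (act (A (i + 1)) a) (-act (χ i) a - act (A i) b) := by
  have : x • b = 0 := by ext; simp [hN]
  rw [cone, act_fromBlocks, act_smul, act_one, this, act_neg, act_neg, add_zero, sub_eq_add_neg]

/-- One half of the long exact sequence of the Eisenbud complex: its homology vanishes where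
both neighbouring homologies of `T ⊗ N` do. -/
theorem ex_cone (hN : ∀ n : N, x • n = 0)
    (hc : ∀ i, A i * χ (i + 1) = χ i * A (i + 1 + 1)) (i : ℤ) (h0 : Ex A N i)
    (h1 : Ex A N (i + 1)) : Ex (ι := fun i => ι (i + 1) ⊕ ι i) (cone x A χ) N i := by
  intro v hv
  obtain ⟨a, b, rfl⟩ : ∃ a b, v = Sum.elim a b := ⟨_, _, (Sum.elim_comp_inl_inr v).symm⟩
  rw [act_cone hN] at hv
  have ha : act (A (i + 1)) a = 0 := funext fun j => congrFun hv (Sum.inl j)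
  have hb : -act (χ i) a - act (A i) b = 0 := funext fun j => congrFun hv (Sum.inr j)
  obtain ⟨a', rfl⟩ := h1 a ha
  obtain ⟨b', hb'⟩ := h0 (b + act (χ (i + 1)) a') (by
    rw [map_add, ← act_mul (A i), hc, act_mul, ← neg_eq_zero, ← hb]; abel)
  refine ⟨Sum.elim a' (-b'), ?_⟩
  rw [act_cone hN, map_neg, hb']
  congr 1
  abel

/-- If the Eisenbud complex tensored with `N` is exact at one spot, vanishing of the homology of
`T ⊗ N` moves two steps down. -/
theorem ex_down (hN : ∀ n : N, x • n = 0)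
    (hc : ∀ i, A i * χ (i + 1) = χ i * A (i + 1 + 1)) (i : ℤ)
    (hC : Ex (ι := fun i => ι (i + 1) ⊕ ι i) (cone x A χ) N i)
    (h : Ex A N (i + 1 + 1)) : Ex A N i := by
  intro b hb
  obtain ⟨v, hv⟩ := hC (Sum.elim 0 b) (by
    rw [act_cone hN, hb]
    ext (j | j) <;> simp)
  obtain ⟨a', b', rfl⟩ : ∃ a b, v = Sum.elim a b := ⟨_, _, (Sum.elim_comp_inl_inr v).symm⟩
  rw [act_cone hN] at hv
  have h1 : act (A (i + 1 + 1)) a' = 0 := funext fun j => congrFun hv (Sum.inl j)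
  have h2 : -act (χ (i + 1)) a' - act (A (i + 1)) b' = b := funext fun j => congrFun hv (Sum.inr j)
  obtain ⟨c, rfl⟩ := h a' h1
  refine ⟨-act (χ (i + 1 + 1)) c - b', ?_⟩
  rw [← h2, map_sub, map_neg, ← act_mul, ← act_mul, hc]

/-- If the Eisenbud complex tensored with `N` is exact at one spot, vanishing of the homology of
`T ⊗ N` moves two steps up. -/
theorem ex_up (hN : ∀ n : N, x • n = 0)
    (hc : ∀ i, A i * χ (i + 1) = χ i * A (i + 1 + 1)) (i : ℤ)
    (hC : Ex (ι := fun i => ι (i + 1) ⊕ ι i) (cone x A χ) N (i + 1))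
    (h : Ex A N i) : Ex A N (i + 1 + 1) := by
  intro a ha
  obtain ⟨b', hb'⟩ := h (act (χ (i + 1)) a) (by rw [← act_mul, hc, act_mul, ha, map_zero])
  obtain ⟨v, hv⟩ := hC (Sum.elim a (-b')) (by
    rw [act_cone hN, ha, map_neg, hb']
    ext (j | j) <;> simp)
  obtain ⟨c, d, rfl⟩ : ∃ a b, v = Sum.elim a b := ⟨_, _, (Sum.elim_comp_inl_inr v).symm⟩
  rw [act_cone hN] at hv
  exact ⟨c, funext fun j => congrFun hv (Sum.inl j)⟩

end Cone

/-- Nakayama: a complex of finite free modules over a Noetherian ring that becomes acyclic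
modulo a nonzerodivisor in the Jacobson radical is acyclic. -/
theorem ex_of_mod [IsNoetherianRing S] {R : Type} [CommRing R] [Algebra S R] {x : S}
    (hx : ∀ s, x * s = 0 → s = 0) (hxJ : x ∈ Ideal.jacobson (⊥ : Ideal S))
    (hsurj : Function.Surjective (algebraMap S R))
    (hker : RingHom.ker (algebraMap S R) = Ideal.span {x})
    {A : ∀ i, Matrix (ι i) (ι (i + 1)) S} (hA : ∀ i, A i * A (i + 1) = 0)
    (h : ∀ i, Ex A R i) (i : ℤ) : Ex A S i := by
  let Z := LinearMap.ker (act (N := S) (A i))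
  let B := LinearMap.range (act (N := S) (A (i + 1)))
  have key : Z ≤ B ⊔ Ideal.span {x} • Z := by
    intro v hv
    have hv : act (A i) v = 0 := hv
    obtain ⟨w, hw⟩ := h i (Algebra.linearMap S R ∘ v) (by rw [act_comp, hv]; ext; simp)
    obtain ⟨w, rfl⟩ := hsurj.comp_left w
    change act _ (Algebra.linearMap S R ∘ w) = _ at hw
    rw [act_comp] at hw
    have : ∀ j, ∃ u, v j - act (A (i + 1)) w j = x * u := by
      intro j
      have : v j - act (A (i + 1)) w j ∈ RingHom.ker (algebraMap S R) := by
        rw [RingHom.mem_ker, map_sub, sub_eq_zero]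
        exact (congrFun hw j).symm
      rw [hker, Ideal.mem_span_singleton] at this
      exact this
    choose u hu using this
    have hu' : v = act (A (i + 1)) w + x • u := by
      ext j
      simp [← hu]
    rw [hu']
    refine Submodule.add_mem_sup ⟨w, rfl⟩
      (Submodule.smul_mem_smul (Ideal.mem_span_singleton_self x) ?_)
    have h1 : x • act (A i) u = 0 := by
      rw [hu', map_add, ← act_mul, hA, act_zero, zero_add, map_smul] at hv
      exact hv
    change act (A i) u = 0
    ext j
    exact hx _ (congrFun h1 j)
  have := Submodule.le_of_le_smul_of_le_jacobson_bot (IsNoetherian.noetherian Z)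
    (by rwa [Ideal.span_singleton_le_iff_mem]) key
  intro v hv
  exact this hv

/-- Rigidity descends along the quotient by a nonzerodivisor in the Jacobson radical. The
homology of the Eisenbud complex tensored with `N` sits in a long exact sequence with two
shifted copies of that of `T ⊗ N`. One-sided vanishing for `T ⊗ N` therefore passes to the
Eisenbud complex, which is then acyclic by rigidity over `S`; hence the connecting maps
`H_n(T ⊗ N) → H_{n-2}(T ⊗ N)` are bijective and the vanishing spreads to all degrees. -/
theorem Rigid.quotient [IsNoetherianRing S] {R : Type} [CommRing R] [Algebra S R] {x : S}
    (hx : ∀ s, x * s = 0 → s = 0) (hxJ : x ∈ Ideal.jacobson (⊥ : Ideal S))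
    (hsurj : Function.Surjective (algebraMap S R))
    (hker : RingHom.ker (algebraMap S R) = Ideal.span {x}) (hS : Rigid S) : Rigid R := by
  classical
  intro ι _ A hA hex N _ _ i₀
  let _ : Module S N := Module.compHom N (algebraMap S R)
  have : IsScalarTower S R N := ⟨fun s r n => by
    rw [Algebra.smul_def, mul_smul]; rfl⟩
  have hx0 : algebraMap S R x = 0 := by
    rw [← RingHom.mem_ker, hker]; exact Ideal.mem_span_singleton_self x
  have hN : ∀ n : N, x • n = 0 := fun n => by
    rw [← algebraMap_smul R x n, hx0, zero_smul]
  have hR : ∀ n : R, x • n = 0 := fun n => by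
    rw [← algebraMap_smul R x n, hx0, zero_smul]
  choose g hg using hsurj
  let A' : ∀ i, Matrix (ι i) (ι (i + 1)) S := fun i => (A i).map g
  have hA' : ∀ i, (A' i).map (algebraMap S R) = A i := by
    intro i; ext a b; simp [A', hg]
  have hχ : ∀ i, ∃ χ : Matrix (ι i) (ι (i + 1 + 1)) S, A' i * A' (i + 1) = x • χ := by
    intro i
    have : ∀ a b, ∃ c, (A' i * A' (i + 1)) a b = x * c := by
      intro a b
      change x ∣ _
      rw [← Ideal.mem_span_singleton, ← hker, RingHom.mem_ker]
      have := congrFun (congrFun (hA i) a) b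
      rw [← hA', ← hA', ← Matrix.map_mul] at this
      exact this
    choose c hc using this
    exact ⟨Matrix.of c, by ext a b; simp [hc]⟩
  choose χ hχ using hχ
  have hc := cone_comm hx hχ
  have exiff : ∀ (L : Type) [AddCommGroup L] [Module R L] [Module S L] [IsScalarTower S R L] i,
      Ex A' L i ↔ Ex A L i := by
    intro L _ _ _ _ i
    unfold Ex
    simp only [← hA', act_map]
  have hC := ex_of_mod hx hxJ (fun r => ⟨g r, hg r⟩) hker (ι := fun i => ι (i + 1) ⊕ ι i)
    (A := cone x A' χ) (cone_mul hx hχ)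
    (fun i => ex_cone hR hc i ((exiff R _).2 (hex _)) ((exiff R _).2 (hex _)))
  have hrig := hS (fun i => ι (i + 1) ⊕ ι i) (cone x A' χ) (cone_mul hx hχ) hC N
  simp only [← exiff]
  constructor
  · intro h
    have hall := (hrig i₀).1 fun i hi => ex_cone hN hc i (h i hi) (h (i + 1) (by omega))
    have : ∀ n : ℕ, ∀ i, i₀ ≤ i + n → Ex A' N i := by
      intro n
      induction n using Nat.strong_induction_on with
      | _ n ih =>
        intro i hi
        by_cases hi0 : i₀ ≤ i
        · exact h i hi0
        · refine ex_down hN hc i (hall i) ?_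
          by_cases hn : n < 2
          · exact h _ (by omega)
          · exact ih (n - 2) (by omega) _ (by omega)
    exact fun i => this (i₀ - i).toNat i (by omega)
  · intro h
    have hall := (hrig (i₀ - 1)).2 fun i hi =>
      ex_cone hN hc i (h i (by omega)) (h (i + 1) (by omega))
    have : ∀ n : ℕ, ∀ i, i ≤ i₀ + n → Ex A' N i := by
      intro n
      induction n using Nat.strong_induction_on with
      | _ n ih =>
        intro i hi
        by_cases hi0 : i ≤ i₀
        · exact h i hi0
        · obtain ⟨i, rfl⟩ : ∃ j, i = j + 1 + 1 := ⟨i - 2, by ring⟩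
          refine ex_up hN hc i (hall _) ?_
          by_cases hn : n < 2
          · exact h _ (by omega)
          · exact ih (n - 2) (by omega) _ (by omega)
    exact fun i => this (i - i₀).toNat i (by omega)

theorem Ex.congr {A : ∀ i, Matrix (ι i) (ι (i + 1)) S} {L L' : Type} [AddCommGroup L]
    [Module S L] [AddCommGroup L'] [Module S L'] {i : ℤ} (h : Ex A L i) (e : L ≃ₗ[S] L') :
    Ex A L' i := by
  intro v hv
  have hv' : act (A i) (e.symm.toLinearMap ∘ v) = 0 := by
    rw [act_comp, hv]; ext; simp
  obtain ⟨w, hw⟩ := h _ hv'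
  refine ⟨e.toLinearMap ∘ w, ?_⟩
  rw [act_comp, hw]
  ext
  simp

theorem Rigid.of_ringEquiv {R : Type} [CommRing R] (hS : Rigid S) (e : S ≃+* R) : Rigid R := by
  intro ι _ A hA hex N _ _ i₀
  let _ : Algebra S R := e.toRingHom.toAlgebra
  let _ : Module S N := Module.compHom N (algebraMap S R)
  have : IsScalarTower S R N := ⟨fun s r n => by
    rw [Algebra.smul_def, mul_smul]; rfl⟩
  let A' : ∀ i, Matrix (ι i) (ι (i + 1)) S := fun i => (A i).map e.symm
  have hA' : ∀ i, (A' i).map (algebraMap S R) = A i := by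
    intro i; ext a b; exact e.apply_symm_apply _
  have exiff : ∀ (L : Type) [AddCommGroup L] [Module R L] [Module S L] [IsScalarTower S R L] i,
      Ex A' L i ↔ Ex A L i := by
    intro L _ _ _ _ i
    unfold Ex
    simp only [← hA', act_map]
  simp only [← exiff]
  let f : R ≃ₗ[S] S :=
    { e.symm with
      map_smul' := fun s r => by
        change e.symm (s • r) = s * e.symm r
        rw [Algebra.smul_def, map_mul]
        congr 1
        exact e.symm_apply_apply s }
  refine hS ι A' (fun i => ?_) (fun i => ((exiff R i).2 (hex i)).congr f) N i₀
  have := congrArg (fun B : Matrix _ _ R => B.map e.symm) (hA i)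
  simp only [Matrix.map_mul] at this
  rw [this]
  ext; simp

/-- Over a local ring, an acyclic complex of finite free modules that stays acyclic after
tensoring with the residue field is contractible, so it stays acyclic after tensoring with
any module. -/
theorem ex_of_residue [IsLocalRing S] {A : ∀ i, Matrix (ι i) (ι (i + 1)) S}
    (hA : ∀ i, A i * A (i + 1) = 0) (h : ∀ i, Ex A S i)
    (hk : ∀ i, Ex A (IsLocalRing.ResidueField S) i)
    (N : Type) [AddCommGroup N] [Module S N] (i : ℤ) : Ex A N i := by
  classical
  let f : ∀ i, (ι (i + 1) → S) →ₗ[S] (ι i → S) := fun i => act (A i)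
  let e : ∀ i, IsLocalRing.ResidueField S ⊗[S] (ι i → S) ≃ₗ[S]
      (ι i → IsLocalRing.ResidueField S) := fun i => TensorProduct.piScalarRight S S _ _
  have he : ∀ i z, e i ((f i).lTensor _ z) = act (A i) (e (i + 1) z) := by
    intro i z
    induction z with
    | zero => simp
    | add x y hx hy => simp only [map_add, hx, hy]
    | tmul x y =>
      ext j
      simp [e, f, act_apply, Finset.sum_smul, mul_smul]
  have hrange : ∀ i, LinearMap.range (f (i + 1)) = LinearMap.ker (f i) := by
    intro i
    ext v
    constructor
    · rintro ⟨w, rfl⟩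
      simp [f, ← act_mul, hA, act_zero]
    · intro hv
      exact h i v hv
  have hsplit : ∀ i, ∃ l', l' ∘ₗ (LinearMap.range (f i)).subtype = LinearMap.id := by
    intro i
    rw [IsLocalRing.split_injective_iff_lTensor_residueField_injective, injective_iff_map_eq_zero]
    intro z hz
    obtain ⟨z, rfl⟩ := LinearMap.lTensor_surjective _ (f i).surjective_rangeRestrict z
    rw [← LinearMap.comp_apply, ← LinearMap.lTensor_comp] at hz
    have hz : (f i).lTensor (IsLocalRing.ResidueField S) z = 0 := hz
    obtain ⟨w, hw⟩ := hk i (e _ z) (by rw [← he, hz, map_zero])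
    obtain ⟨w, rfl⟩ := (e _).surjective w
    rw [← he] at hw
    rw [← (e _).injective hw, ← LinearMap.comp_apply, ← LinearMap.lTensor_comp]
    have : (f i).rangeRestrict ∘ₗ f (i + 1) = 0 := by
      ext1 v
      apply LinearMap.ext
      intro t
      apply Subtype.ext
      simp [f, ← act_mul, hA, act_zero]
    rw [this, LinearMap.lTensor_zero, LinearMap.zero_apply]
  obtain ⟨π, hπ⟩ := hsplit i
  have hproj : Module.Projective S (LinearMap.range (f i)) := Module.Projective.of_split _ π hπ
  obtain ⟨s, hs⟩ := Module.projective_lifting_property (f i).rangeRestrict LinearMap.id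
    (f i).surjective_rangeRestrict
  -- `t ↦ t - s π (A t)` maps into the cycles, which are the boundaries
  let g : (ι (i + 1) → S) →ₗ[S] LinearMap.range (f (i + 1)) :=
    LinearMap.codRestrict _ (LinearMap.id - s ∘ₗ π ∘ₗ f i) (fun t => by
      rw [hrange]
      have h1 : π (f i t) = (f i).rangeRestrict t :=
        LinearMap.congr_fun hπ ((f i).rangeRestrict t)
      have h2 := congrArg Subtype.val (LinearMap.congr_fun hs ((f i).rangeRestrict t))
      simp only [LinearMap.comp_apply, LinearMap.id_apply] at h2
      change f i (s _) = f i t at h2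
      simp [h1, h2])
  obtain ⟨H, hH⟩ := Module.projective_lifting_property (f (i + 1)).rangeRestrict g
    (f (i + 1)).surjective_rangeRestrict
  have hid : A (i + 1) * LinearMap.toMatrix' H + LinearMap.toMatrix' (s ∘ₗ π) * A i = 1 := by
    apply Matrix.toLin'.injective
    apply LinearMap.ext
    intro t
    have h1 : f (i + 1) (H t) = t - s (π (f i t)) :=
      congrArg Subtype.val (LinearMap.congr_fun hH t)
    have h2 : ∀ {m n : Type} [Fintype n] [DecidableEq n] (B : Matrix m n S) (v : n → S),
        Matrix.toLin' B v = act B v := by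
      intros; ext; simp [act_apply, Matrix.mulVec, dotProduct]
    rw [h2, h2, act_add, act_mul, act_mul, act_toMatrix', act_toMatrix', act_one]
    change f (i + 1) (H t) + s (π (f i t)) = t
    rw [h1, sub_add_cancel]
  intro v hv
  refine ⟨act (LinearMap.toMatrix' H) v, ?_⟩
  conv_rhs => rw [← act_one (R := S) v, ← hid, act_add, act_mul, act_mul, hv, map_zero, add_zero]

theorem isSMulRegular_take {xs : List S} (hreg : RingTheory.Sequence.IsWeaklyRegular S xs)
    (k : ℕ) (hk : k < xs.length) : IsSMulRegular (S ⧸ Ideal.ofList (xs.take k)) xs[k] := by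
  have := hreg.regular_mod_prev k hk
  rwa [smul_eq_mul, Ideal.mul_top] at this

theorem ofList_take_succ {xs : List S} (k : ℕ) (hk : k < xs.length) :
    Ideal.ofList (xs.take (k + 1)) = Ideal.ofList (xs.take k) ⊔ Ideal.span {xs[k]} := by
  rw [List.take_succ_eq_append_getElem hk, Ideal.ofList_append, Ideal.ofList_singleton]

/-- Over a regular local ring every acyclic complex of finite free modules stays acyclic under
tensor products, by reduction to the residue field along a regular system of parameters. -/
theorem rigid_of_isRegularLocal [IsLocalRing S] {ys : List S}
    (hreg : RingTheory.Sequence.IsWeaklyRegular S ys)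
    (hm : Ideal.ofList ys = IsLocalRing.maximalIdeal S) : Rigid S := by
  intro ι _ A hA h N _ _ i₀
  have hstep : ∀ k, k ≤ ys.length → ∀ i, Ex A (S ⧸ Ideal.ofList (ys.take k)) i := by
    intro k
    induction k with
    | zero =>
      exact fun _ i => (h i).congr (Submodule.quotEquivOfEqBot _ (by simp)).symm
    | succ k ih =>
      intro hk
      have hle : Ideal.ofList (ys.take k) ≤ Ideal.ofList (ys.take (k + 1)) := by
        rw [ofList_take_succ k hk]; exact le_sup_left
      refine ex_quotient hA (Submodule.factor hle) (Submodule.factor_surjective hle) ys[k]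
        (isSMulRegular_take hreg k hk) ?_ ?_ (ih (by omega))
      · intro l hl
        obtain ⟨l, rfl⟩ := Submodule.mkQ_surjective _ l
        rw [Submodule.factor_mk, Submodule.mkQ_apply, Submodule.Quotient.mk_eq_zero,
          ofList_take_succ k hk, Submodule.mem_sup] at hl
        obtain ⟨a, ha, b, hb, rfl⟩ := hl
        obtain ⟨c, rfl⟩ := Ideal.mem_span_singleton.1 hb
        refine ⟨Submodule.mkQ _ c, ?_⟩
        rw [← map_smul, ← sub_eq_zero, ← map_sub]
        simpa using Ideal.Quotient.eq_zero_iff_mem.2 ha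
      · intro l
        obtain ⟨l, rfl⟩ := Submodule.mkQ_surjective _ l
        rw [← map_smul, Submodule.factor_mk, Submodule.mkQ_apply, Submodule.Quotient.mk_eq_zero,
          ofList_take_succ k hk]
        exact Ideal.mem_sup_right (Ideal.mul_mem_right _ _ (Ideal.mem_span_singleton_self _))
  have hk := hstep ys.length le_rfl
  rw [List.take_length, hm] at hk
  exact ⟨fun _ => ex_of_residue hA h hk N, fun _ => ex_of_residue hA h hk N⟩

/-- Rigidity holds over complete intersections, by induction on the codimension. -/
theorem rigid_of_completeIntersection [IsLocalRing S] [IsNoetherianRing S] (hS : Rigid S)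
    {xs : List S} (hreg : RingTheory.Sequence.IsWeaklyRegular S xs)
    (hxm : ∀ x ∈ xs, x ∈ IsLocalRing.maximalIdeal S) (k : ℕ) (hk : k ≤ xs.length)
    (R : Type) [CommRing R] (φ : S →+* R) (hφ : Function.Surjective φ)
    (hker : RingHom.ker φ = Ideal.ofList (xs.take k)) : Rigid R := by
  induction k generalizing R with
  | zero =>
    exact hS.of_ringEquiv (RingEquiv.ofBijective φ
      ⟨(RingHom.injective_iff_ker_eq_bot φ).2 (by simpa using hker), hφ⟩)
  | succ k ih =>
    have hle : Ideal.ofList (xs.take k) ≤ Ideal.ofList (xs.take (k + 1)) := by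
      rw [ofList_take_succ k hk]; exact le_sup_left
    let ψ : (S ⧸ Ideal.ofList (xs.take k)) →+* R :=
      Ideal.Quotient.lift _ φ (fun a ha => by rw [← RingHom.mem_ker, hker]; exact hle ha)
    have hψ : Function.Surjective ψ := Ideal.Quotient.lift_surjective_of_surjective _ _ hφ
    let _ := ψ.toAlgebra
    refine Rigid.quotient (S := S ⧸ Ideal.ofList (xs.take k)) (x := Ideal.Quotient.mk _ xs[k])
      ?_ ?_ hψ ?_ (ih (by omega) _ (Ideal.Quotient.mk _) Ideal.Quotient.mk_surjective
        (Ideal.mk_ker))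
    · intro s hs
      apply isSMulRegular_take hreg k hk
      simp only [smul_zero]
      rw [← hs]
      exact Algebra.smul_def _ _
    · have := hxm xs[k] (List.getElem_mem hk)
      rw [← IsLocalRing.jacobson_eq_maximalIdeal ⊥ bot_ne_top] at this
      rw [Ideal.mem_jacobson_bot] at this ⊢
      intro y
      obtain ⟨y, rfl⟩ := Ideal.Quotient.mk_surjective y
      simpa using (this y).map (Ideal.Quotient.mk (Ideal.ofList (xs.take k)))
    · ext s
      obtain ⟨s, rfl⟩ := Ideal.Quotient.mk_surjective s
      change φ s = 0 ↔ _
      rw [← RingHom.mem_ker, hker, ofList_take_succ k hk, Ideal.mem_span_singleton]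
      constructor
      · intro h
        obtain ⟨a, ha, b, hb, rfl⟩ := Submodule.mem_sup.1 h
        obtain ⟨c, rfl⟩ := Ideal.mem_span_singleton.1 hb
        refine ⟨Ideal.Quotient.mk _ c, ?_⟩
        rw [map_add, Ideal.Quotient.eq_zero_iff_mem.2 ha, zero_add, map_mul]
      · rintro ⟨c, hc⟩
        obtain ⟨c, rfl⟩ := Ideal.Quotient.mk_surjective c
        rw [← map_mul, Ideal.Quotient.mk_eq_mk_iff_sub_mem] at hc
        exact Submodule.mem_sup.2 ⟨_, hc, xs[k] * c,
          Ideal.mul_mem_right _ _ (Ideal.mem_span_singleton_self _), by ring⟩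

end Rigid

/-! ### Ext and Tor through explicit resolutions -/

section ExtTor

variable {R : Type} [CommRing R]

theorem subsingleton_iff_exactAt {X : ModuleCat R} {ι : Type*} {c : ComplexShape ι}
    (K : HomologicalComplex (ModuleCat R) c) (i : ι) (e : X ≅ K.homology i) :
    Subsingleton X ↔ K.ExactAt i := by
  rw [HomologicalComplex.exactAt_iff_isZero_homology, ← e.isZero_iff,
    ModuleCat.isZero_iff_subsingleton]

/-- A resolution by projective modules, as a `ProjectiveResolution` in the category of modules. -/
noncomputable def projRes {F : ℕ → Type} [∀ n, AddCommGroup (F n)] [∀ n, Module R (F n)]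
    [∀ n, Module.Projective R (F n)] (D : ∀ n, F (n + 1) →ₗ[R] F n)
    {X : Type} [AddCommGroup X] [Module R X] (ε : F 0 →ₗ[R] X) (hε : Function.Surjective ε)
    (h0 : Function.Exact (D 0) ε) (hD : ∀ n, Function.Exact (D (n + 1)) (D n)) :
    ProjectiveResolution (ModuleCat.of R X) where
  complex := ChainComplex.of (fun n => ModuleCat.of R (F n)) (fun n => ModuleCat.ofHom (D n))
    (fun n => by
      rw [← ModuleCat.ofHom_comp, (hD n).linearMap_comp_eq_zero]; rfl)
  projective n := by
    change Projective (ModuleCat.of R (F n))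
    infer_instance
  π := (ChainComplex.toSingle₀Equiv _ _).symm ⟨ModuleCat.ofHom ε, by
    rw [show (ChainComplex.of (fun n => ModuleCat.of R (F n)) (fun n => ModuleCat.ofHom (D n))
      _).d 1 0 = ModuleCat.ofHom (D 0) from ChainComplex.of_d (fun n => ModuleCat.of R (F n))
      (fun n => ModuleCat.ofHom (D n)) 0]
    rw [← ModuleCat.ofHom_comp, h0.linearMap_comp_eq_zero]; rfl⟩
  quasiIso := ⟨fun n => by
    cases n
    · rw [ChainComplex.quasiIsoAt₀_iff, ShortComplex.quasiIso_iff_of_zeros']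
      · dsimp
        refine (ShortComplex.exact_and_epi_g_iff_of_iso (S₁ := ShortComplex.mk
          (ModuleCat.ofHom (D 0)) (ModuleCat.ofHom ε) (by
            rw [← ModuleCat.ofHom_comp, h0.linearMap_comp_eq_zero]; rfl)) ?_).1 ⟨?_, ?_⟩
        · exact ShortComplex.isoMk (Iso.refl _) (Iso.refl _) (Iso.refl _)
            (by
              refine (Category.id_comp _).trans (Eq.trans ?_ (Category.comp_id _).symm)
              exact ChainComplex.of_d (fun n => ModuleCat.of R (F n))
                (fun n => ModuleCat.ofHom (D n)) 0)
            (by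
              refine (Category.id_comp _).trans (Eq.trans ?_ (Category.comp_id _).symm)
              exact ChainComplex.toSingle₀Equiv_symm_apply_f_zero _ _)
        · exact (ShortComplex.ShortExact.moduleCat_exact_iff_function_exact _).2 h0
        · exact (ModuleCat.epi_iff_surjective _).2 hε
      all_goals rfl
    · rw [quasiIsoAt_iff_exactAt']
      · rename_i n
        rw [HomologicalComplex.exactAt_iff' _ (n + 1 + 1) (n + 1) n (by simp) (by simp),
          ShortComplex.ShortExact.moduleCat_exact_iff_function_exact]
        let K := ChainComplex.of (fun n => ModuleCat.of R (F n))
          (fun n => ModuleCat.ofHom (D n)) (fun n => by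
            rw [← ModuleCat.ofHom_comp, (hD n).linearMap_comp_eq_zero]; rfl)
        have hd : ∀ n, K.d (n + 1) n = ModuleCat.ofHom (D n) :=
          fun n => ChainComplex.of_d (fun n => ModuleCat.of R (F n))
            (fun n => ModuleCat.ofHom (D n)) n
        have : Function.Exact (K.d (n + 1 + 1) (n + 1)).hom (K.d (n + 1) n).hom := by
          rw [hd, hd]
          exact hD n
        exact this
      · apply ChainComplex.exactAt_succ_single_obj⟩

/-- Vanishing of `Ext` in positive degree, as exactness of `Hom(F, N)` for any projective
resolution `F`. -/
theorem ext_iff {F : ℕ → Type} [∀ n, AddCommGroup (F n)] [∀ n, Module R (F n)]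
    [∀ n, Module.Projective R (F n)] (D : ∀ n, F (n + 1) →ₗ[R] F n)
    {X : Type} [AddCommGroup X] [Module R X] (ε : F 0 →ₗ[R] X) (hε : Function.Surjective ε)
    (h0 : Function.Exact (D 0) ε) (hD : ∀ n, Function.Exact (D (n + 1)) (D n))
    (N : Type) [AddCommGroup N] [Module R N] (n : ℕ) :
    Subsingleton (ExtM R X N (n + 1)) ↔
      ∀ f : F (n + 1) →ₗ[R] N, f ∘ₗ D (n + 1) = 0 → ∃ g, g ∘ₗ D n = f := by
  unfold ExtM
  rw [subsingleton_iff_exactAt _ _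
    ((projRes D ε hε h0 hD).isoExt (n + 1) (ModuleCat.of R N))]
  rw [HomologicalComplex.exactAt_iff' _ n (n + 1) (n + 2) (by simp) (by simp)]
  rw [ShortComplex.moduleCat_exact_iff]
  have hd : ∀ n, (projRes D ε hε h0 hD).complex.d (n + 1) n = ModuleCat.ofHom (D n) :=
    fun n => ChainComplex.of_d (fun n => ModuleCat.of R (F n))
      (fun n => ModuleCat.ofHom (D n)) n
  constructor
  · intro H f hf
    obtain ⟨g, hg⟩ := H (ModuleCat.ofHom f) (by
      change (projRes D ε hε h0 hD).complex.d (n + 2) (n + 1) ≫ ModuleCat.ofHom f = 0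
      rw [hd]
      exact ModuleCat.hom_ext hf)
    change (projRes D ε hε h0 hD).complex.d (n + 1) n ≫ g = ModuleCat.ofHom f at hg
    rw [hd] at hg
    exact ⟨g.hom, congrArg ModuleCat.Hom.hom hg⟩
  · intro H f hf
    change (projRes D ε hε h0 hD).complex.d (n + 2) (n + 1) ≫ f = 0 at hf
    rw [hd] at hf
    obtain ⟨g, hg⟩ := H f.hom (congrArg ModuleCat.Hom.hom hf)
    refine ⟨ModuleCat.ofHom g, ?_⟩
    change (projRes D ε hε h0 hD).complex.d (n + 1) n ≫ ModuleCat.ofHom g = f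
    rw [hd]
    exact ModuleCat.hom_ext hg

/-- Vanishing of `Tor`, as exactness of `M ⊗ P`. The derived functor is taken in the second
variable, so `P` resolves `N`. -/
theorem tor_iff (M N : Type) [AddCommGroup M] [Module R M] [AddCommGroup N] [Module R N]
    (P : ProjectiveResolution (ModuleCat.of R N)) (n : ℕ) :
    Subsingleton (TorM R M N (n + 1)) ↔
      Function.Exact ((P.complex.d (n + 2) (n + 1)).hom.lTensor M)
        ((P.complex.d (n + 1) n).hom.lTensor M) := by
  unfold TorM
  refine (subsingleton_iff_exactAt _ _ (P.isoLeftDerivedObj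
    ((MonoidalCategory.tensoringLeft (ModuleCat R)).obj (ModuleCat.of R M)) (n + 1))).trans ?_
  rw [HomologicalComplex.exactAt_iff' _ (n + 2) (n + 1) n (by simp) (by simp)]
  rw [ShortComplex.ShortExact.moduleCat_exact_iff_function_exact]
  rfl
end ExtTor

/-! ### Balancing of Tor -/

section Balance

variable {R : Type} [CommRing R]

section Chase

variable {A A' B B' C C' : ℕ → Type} [∀ i, AddCommGroup (A i)] [∀ i, Module R (A i)]
  [∀ i, AddCommGroup (B i)] [∀ i, Module R (B i)] [∀ i, AddCommGroup (C i)] [∀ i, Module R (C i)]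
  (dA : ∀ i, A (i + 1) →ₗ[R] A i) (dB : ∀ i, B (i + 1) →ₗ[R] B i) (dC : ∀ i, C (i + 1) →ₗ[R] C i)
  (f : ∀ i, A i →ₗ[R] B i) (g : ∀ i, B i →ₗ[R] C i)
  (hA : ∀ i x, dA i (dA (i + 1) x) = 0)
  (hC : ∀ i x, dC i (dC (i + 1) x) = 0)
  (hB : ∀ i, Function.Exact (dB (i + 1)) (dB i))
  (hf : ∀ i x, f i (dA i x) = dB i (f (i + 1) x))
  (hg : ∀ i x, g i (dB i x) = dC i (g (i + 1) x))
  (finj : ∀ i, Function.Injective (f i)) (gsurj : ∀ i, Function.Surjective (g i))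
  (fg : ∀ i, Function.Exact (f i) (g i))

include hA hC hB hf hg finj gsurj fg

/-- Diagram chase for a termwise short exact sequence `0 → A → B → C → 0` of complexes with `B`
exact in positive degrees: the connecting map `H_{i+2}(C) → H_{i+1}(A)` is bijective, here in the
form that one group vanishes if and only if the other does. -/
theorem chase (i : ℕ) : Function.Exact (dC (i + 2)) (dC (i + 1)) ↔
    Function.Exact (dA (i + 1)) (dA i) := by
  constructor
  · refine fun H a => ⟨fun ha => ?_, ?_⟩
    · obtain ⟨b, hb⟩ := (hB i (f (i + 1) a)).1 (by rw [← hf, ha, map_zero])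
      obtain ⟨c, hc⟩ := (H (g _ b)).1 (by rw [← hg, hb, (fg _).apply_apply_eq_zero])
      obtain ⟨b', rfl⟩ := gsurj _ c
      obtain ⟨a', ha'⟩ := (fg _ (b - dB _ b')).1 (by rw [map_sub, hg, hc, sub_self])
      refine ⟨a', finj _ ?_⟩
      rw [hf, ha', map_sub, (hB _).apply_apply_eq_zero, sub_zero, hb]
    · rintro ⟨x, rfl⟩
      exact hA _ _
  · refine fun H c => ⟨fun hc => ?_, ?_⟩
    · obtain ⟨b, rfl⟩ := gsurj _ c
      obtain ⟨a, ha⟩ := (fg _ (dB _ b)).1 (by rw [hg, hc])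
      obtain ⟨a', rfl⟩ := (H a).1 (finj _ (by
        rw [hf, ha, (hB _).apply_apply_eq_zero, map_zero]))
      obtain ⟨b', hb'⟩ := (hB _ (b - f _ a')).1 (by rw [map_sub, ← hf, ha, sub_self])
      refine ⟨g _ b', ?_⟩
      rw [← hg, hb', map_sub, (fg _).apply_apply_eq_zero, sub_zero]
    · rintro ⟨x, rfl⟩
      exact hC _ _

omit hA in
/-- The bottom degree of the same long exact sequence: `H_1(C)` is the kernel of
`H_0(A) → H_0(B)`. -/
theorem chase₀ {A₀ B₀ : Type} [AddCommGroup A₀] [Module R A₀] [AddCommGroup B₀] [Module R B₀]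
    (πA : A 0 →ₗ[R] A₀) (πB : B 0 →ₗ[R] B₀) (f₀ : A₀ →ₗ[R] B₀)
    (hf₀ : ∀ x, f₀ (πA x) = πB (f 0 x)) (hπA : Function.Surjective πA)
    (hA₀ : Function.Exact (dA 0) πA) (hB₀ : Function.Exact (dB 0) πB) :
    Function.Exact (dC 1) (dC 0) ↔ Function.Injective f₀ := by
  constructor
  · refine fun H => (injective_iff_map_eq_zero _).2 fun z hz => ?_
    obtain ⟨a, rfl⟩ := hπA z
    obtain ⟨b, hb⟩ := (hB₀ (f _ a)).1 (by rw [← hf₀, hz])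
    obtain ⟨c, hc⟩ := (H (g _ b)).1 (by rw [← hg, hb, (fg _).apply_apply_eq_zero])
    obtain ⟨b', rfl⟩ := gsurj _ c
    obtain ⟨a', ha'⟩ := (fg _ (b - dB _ b')).1 (by rw [map_sub, hg, hc, sub_self])
    refine (hA₀ a).2 ⟨a', finj _ ?_⟩
    rw [hf, ha', map_sub, (hB _).apply_apply_eq_zero, sub_zero, hb]
  · refine fun H c => ⟨fun hc => ?_, ?_⟩
    · obtain ⟨b, rfl⟩ := gsurj _ c
      obtain ⟨a, ha⟩ := (fg _ (dB _ b)).1 (by rw [hg, hc])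
      obtain ⟨a', rfl⟩ := (hA₀ a).1 (H (by
        rw [hf₀, ha, hB₀.apply_apply_eq_zero, map_zero]))
      obtain ⟨b', hb'⟩ := (hB _ (b - f _ a')).1 (by rw [map_sub, ← hf, ha, sub_self])
      refine ⟨g _ b', ?_⟩
      rw [← hg, hb', map_sub, (fg _).apply_apply_eq_zero, sub_zero]
    · rintro ⟨x, rfl⟩
      exact hC _ _

end Chase

theorem exists_aug {N : Type} [AddCommGroup N] [Module R N]
    (P : ProjectiveResolution (ModuleCat.of R N)) : ∃ π : P.complex.X 0 →ₗ[R] N,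
      Function.Surjective π ∧ Function.Exact (P.complex.d 1 0).hom π := by
  refine ⟨(P.π.f 0).hom, ?_, ?_⟩
  · exact (ModuleCat.epi_iff_surjective (P.π.f 0)).1 inferInstance
  · exact (ShortComplex.ShortExact.moduleCat_exact_iff_function_exact _).1 P.exact₀

theorem exact_res {N : Type} [AddCommGroup N] [Module R N]
    (P : ProjectiveResolution (ModuleCat.of R N)) (n : ℕ) :
    Function.Exact (P.complex.d (n + 2) (n + 1)).hom (P.complex.d (n + 1) n).hom :=
  (ShortComplex.ShortExact.moduleCat_exact_iff_function_exact _).1 (P.exact_succ n)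

section

variable {Z T M N : Type} [AddCommGroup Z] [Module R Z] [AddCommGroup T] [Module R T]
  [AddCommGroup M] [Module R M] [AddCommGroup N] [Module R N] [Module.Flat R T]
  (f : Z →ₗ[R] T) (g : T →ₗ[R] M) (hf : Function.Injective f) (hg : Function.Surjective g)
  (hfg : Function.Exact f g)

include hf hg hfg

/-- Dimension shifting in the first variable along `0 → Z → T → M → 0` with `T` flat. -/
theorem tor_shift_aux :
    (∀ i, Subsingleton (TorM R M N (i + 2)) ↔ Subsingleton (TorM R Z N (i + 1))) ∧
    (Subsingleton (TorM R M N 1) ↔ Function.Injective (f.rTensor N)) := by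
  let P := projectiveResolution (ModuleCat.of R N)
  have hP : ∀ i, Module.Flat R (P.complex.X i) := fun i => by
    have := (IsProjective.iff_projective (R := R) (P.complex.X i)).2 (P.projective i)
    infer_instance
  obtain ⟨π, hπ, hπ'⟩ := exists_aug P
  have dd : ∀ (L : Type) [AddCommGroup L] [Module R L] (i : ℕ) (x : L ⊗[R] P.complex.X (i + 2)),
      (P.complex.d (i + 1) i).hom.lTensor L ((P.complex.d (i + 2) (i + 1)).hom.lTensor L x) = 0 := by
    intro L _ _ i x
    rw [← LinearMap.comp_apply, ← LinearMap.lTensor_comp, (exact_res P i).linearMap_comp_eq_zero,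
      LinearMap.lTensor_zero, LinearMap.zero_apply]
  have comm : ∀ {L L' X X' : Type} [AddCommGroup L] [Module R L] [AddCommGroup L'] [Module R L']
      [AddCommGroup X] [Module R X] [AddCommGroup X'] [Module R X']
      (h : L →ₗ[R] L') (d : X →ₗ[R] X') (x : L ⊗[R] X),
      h.rTensor X' (d.lTensor L x) = d.lTensor L' (h.rTensor X x) := by
    intro L L' X X' _ _ _ _ _ _ _ _ h d x
    rw [← LinearMap.comp_apply, ← LinearMap.comp_apply, LinearMap.rTensor_comp_lTensor,
      LinearMap.lTensor_comp_rTensor]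
  refine ⟨fun i => ?_, ?_⟩
  · rw [tor_iff M N P, tor_iff Z N P]
    exact chase (fun i => (P.complex.d (i + 1) i).hom.lTensor Z)
      (fun i => (P.complex.d (i + 1) i).hom.lTensor T)
      (fun i => (P.complex.d (i + 1) i).hom.lTensor M)
      (fun i => f.rTensor (P.complex.X i)) (fun i => g.rTensor (P.complex.X i)) (dd Z) (dd M)
      (fun i => Module.Flat.lTensor_exact T (exact_res P i)) (fun i => comm f _)
      (fun i => comm g _) (fun i => Module.Flat.rTensor_preserves_injective_linearMap f hf)
      (fun i => LinearMap.rTensor_surjective _ hg) (fun i => rTensor_exact _ hfg hg) i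
  · rw [tor_iff M N P]
    exact chase₀ (fun i => (P.complex.d (i + 1) i).hom.lTensor Z)
      (fun i => (P.complex.d (i + 1) i).hom.lTensor T)
      (fun i => (P.complex.d (i + 1) i).hom.lTensor M)
      (fun i => f.rTensor (P.complex.X i)) (fun i => g.rTensor (P.complex.X i)) (dd M)
      (fun i => Module.Flat.lTensor_exact T (exact_res P i)) (fun i => comm f _)
      (fun i => comm g _) (fun i => Module.Flat.rTensor_preserves_injective_linearMap f hf)
      (fun i => LinearMap.rTensor_surjective _ hg) (fun i => rTensor_exact _ hfg hg)
      (π.lTensor Z) (π.lTensor T) (f.rTensor N) (comm f _) (LinearMap.lTensor_surjective _ hπ)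
      (lTensor_exact _ hπ' hπ) (lTensor_exact _ hπ' hπ)

end

/-- Balancing of `Tor`: vanishing of `Tor_{n+1}(M, N)` can be read off from a flat resolution of
the first variable. The induction on `n` replaces `M` by its first syzygy. -/
theorem tor_iff_rTensor (N : Type) [AddCommGroup N] [Module R N] (n : ℕ) :
    ∀ (F : ℕ → Type) [∀ n, AddCommGroup (F n)] [∀ n, Module R (F n)] [∀ n, Module.Flat R (F n)]
    (D : ∀ n, F (n + 1) →ₗ[R] F n) (M : Type) [AddCommGroup M] [Module R M]
    (ε : F 0 →ₗ[R] M) (_ : Function.Surjective ε)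
    (_ : Function.Exact (D 0) ε) (_ : ∀ n, Function.Exact (D (n + 1)) (D n)),
    Subsingleton (TorM R M N (n + 1)) ↔
      Function.Exact ((D (n + 1)).rTensor N) ((D n).rTensor N) := by
  induction n with
  | zero =>
    intro F _ _ _ D M _ _ ε hε h0 hD
    rw [(tor_shift_aux (LinearMap.range (D 0)).subtype ε Subtype.val_injective hε
      (by intro x; simpa using h0 x)).2]
    have hs := LinearMap.rTensor_surjective N (D 0).surjective_rangeRestrict
    have hex : Function.Exact ((D 1).rTensor N) ((D 0).rangeRestrict.rTensor N) :=
      rTensor_exact N (fun x => by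
        rw [← hD 0 x]; exact Subtype.ext_iff) (D 0).surjective_rangeRestrict
    have hc : ∀ x, (D 0).rTensor N x =
        (LinearMap.range (D 0)).subtype.rTensor N ((D 0).rangeRestrict.rTensor N x) := by
      intro x
      rw [← LinearMap.comp_apply, ← LinearMap.rTensor_comp]
      rfl
    constructor
    · intro H x
      rw [hc, map_eq_zero_iff _ H]
      exact hex x
    · intro H
      refine (injective_iff_map_eq_zero _).2 fun z hz => ?_
      obtain ⟨x, rfl⟩ := hs z
      rw [← hc] at hz
      exact (hex x).2 ((H x).1 hz)
  | succ n ih =>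
    intro F _ _ _ D M _ _ ε hε h0 hD
    rw [(tor_shift_aux (LinearMap.range (D 0)).subtype ε Subtype.val_injective hε
      (by intro x; simpa using h0 x)).1]
    exact ih (fun n => F (n + 1)) (fun n => D (n + 1)) _ (D 0).rangeRestrict
      (D 0).surjective_rangeRestrict (fun x => by
        rw [← hD 0 x]; exact Subtype.ext_iff) (fun n => hD (n + 1))

end Balance

/-! ### The complete resolution of a totally reflexive module -/

section Splice

variable {R : Type} [CommRing R]

/-- Under `Hom(Rᵐ, N) = Nᵐ`, precomposition with a matrix is the action of its transpose. -/
theorem piEquiv_comp_act {m n : Type} [Fintype m] [Fintype n] [DecidableEq m] [DecidableEq n]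
    {N : Type} [AddCommGroup N] [Module R N] (B : Matrix m n R) (v : m → N) :
    Module.piEquiv m R N v ∘ₗ act B = Module.piEquiv n R N (act B.transpose v) := by
  ext x
  simp only [LinearMap.comp_apply, Module.piEquiv_apply_apply, act_apply, Matrix.transpose_apply,
    LinearMap.single_apply, Pi.single_apply, ite_smul, one_smul, zero_smul, Finset.sum_ite_eq',
    Finset.mem_univ, if_true, smul_eq_mul, mul_ite, mul_one, mul_zero]

theorem piEquiv_single {n : Type} [Fintype n] [DecidableEq n] (v : n → R) (j : n) :
    Module.piEquiv n R R v (Pi.single j 1) = v j := by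
  simp [Module.piEquiv_apply_apply, Pi.single_apply]

theorem mul_eq_zero_of_act {m n p : Type} [Fintype n] [Fintype p] [DecidableEq p]
    {A : Matrix m n R} {B : Matrix n p R} (h : ∀ v : p → R, act A (act B v) = 0) : A * B = 0 := by
  ext i j
  have := congrFun (h (Pi.single j 1)) i
  rw [← act_mul] at this
  simpa [act_apply, Pi.single_apply] using this

theorem exists_factor {X Y Z : Type} [AddCommGroup X] [Module R X] [AddCommGroup Y] [Module R Y]
    [AddCommGroup Z] [Module R Z] (p : X →ₗ[R] Y) (hp : Function.Surjective p) (f : X →ₗ[R] Z)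
    (h : ∀ x, p x = 0 → f x = 0) : ∃ g : Y →ₗ[R] Z, ∀ x, g (p x) = f x := by
  refine ⟨(LinearMap.ker p).liftQ f h ∘ₗ (p.quotKerEquivOfSurjective hp).symm.toLinearMap,
    fun x => ?_⟩
  have : (p.quotKerEquivOfSurjective hp).symm (p x) = (LinearMap.ker p).mkQ x := by
    rw [LinearEquiv.symm_apply_eq]
    rfl
  rw [LinearMap.comp_apply, LinearEquiv.coe_coe, this]
  rfl

section Matrices

variable {r : ℕ → ℕ} (B : ∀ n, Matrix (Fin (r n)) (Fin (r (n + 1))) R)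
  {X : Type} [AddCommGroup X] [Module R X] (ε : (Fin (r 0) → R) →ₗ[R] X)
  (hε : Function.Surjective ε) (h0 : Function.Exact (act (N := R) (B 0)) ε)
  (hB : ∀ n, Function.Exact (act (N := R) (B (n + 1))) (act (N := R) (B n)))
  (N : Type) [AddCommGroup N] [Module R N] (n : ℕ)

include hε h0 hB

theorem ext_iff_act : Subsingleton (ExtM R X N (n + 1)) ↔
    ∀ v : Fin (r (n + 1)) → N, act (B (n + 1)).transpose v = 0 →
      ∃ w, act (B n).transpose w = v := by
  rw [ext_iff (F := fun n => Fin (r n) → R) (fun n => act (N := R) (B n)) ε hε h0 hB]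
  constructor
  · intro H v hv
    obtain ⟨g, hg⟩ := H (Module.piEquiv _ R N v) (by rw [piEquiv_comp_act, hv, map_zero])
    obtain ⟨w, rfl⟩ := (Module.piEquiv _ R N).surjective g
    rw [piEquiv_comp_act] at hg
    exact ⟨w, (Module.piEquiv _ R N).injective hg⟩
  · intro H f hf
    obtain ⟨v, rfl⟩ := (Module.piEquiv _ R N).surjective f
    rw [piEquiv_comp_act, LinearEquiv.map_eq_zero_iff] at hf
    obtain ⟨w, rfl⟩ := H v hf
    exact ⟨Module.piEquiv _ R N w, piEquiv_comp_act _ _⟩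

theorem tor_iff_act : Subsingleton (TorM R X N (n + 1)) ↔
    ∀ v : Fin (r (n + 1)) → N, act (B n) v = 0 → ∃ w, act (B (n + 1)) w = v := by
  rw [tor_iff_rTensor N n (fun n => Fin (r n) → R) (fun n => act (N := R) (B n)) X ε hε h0 hB]
  let e : ∀ n, (Fin (r n) → R) ⊗[R] N ≃ₗ[R] (Fin (r n) → N) := fun n =>
    TensorProduct.comm R _ _ ≪≫ₗ TensorProduct.piScalarRight R R N _
  have he : ∀ n z, e n ((act (N := R) (B n)).rTensor N z) = act (B n) (e (n + 1) z) := by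
    intro n z
    induction z with
    | zero => simp
    | add x y hx hy => simp only [map_add, hx, hy]
    | tmul x y =>
      ext j
      simp [e, act_apply, Finset.sum_smul, mul_smul]
  have hmul : B n * B (n + 1) = 0 :=
    mul_eq_zero_of_act fun v => (hB n).apply_apply_eq_zero v
  constructor
  · intro H v hv
    obtain ⟨z, rfl⟩ := (e _).surjective v
    rw [← he, LinearEquiv.map_eq_zero_iff] at hv
    obtain ⟨w, rfl⟩ := (H z).1 hv
    exact ⟨e _ w, (he _ _).symm⟩
  · refine fun H z => ⟨fun hz => ?_, ?_⟩
    · obtain ⟨w, hw⟩ := H (e _ z) (by rw [← he, hz, map_zero])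
      obtain ⟨w, rfl⟩ := (e _).surjective w
      exact ⟨w, (e _).injective (by rw [he, hw])⟩
    · rintro ⟨w, rfl⟩
      apply (e _).injective
      rw [he, he, ← act_mul, hmul, act_zero, map_zero]

end Matrices

variable {r r' : ℕ → ℕ} (B : ∀ n, Matrix (Fin (r n)) (Fin (r (n + 1))) R)
  (B' : ∀ n, Matrix (Fin (r' n)) (Fin (r' (n + 1))) R) (c : Matrix (Fin (r' 0)) (Fin (r 0)) R)

/-- Ranks of the complete resolution: those of a resolution of `M` in nonnegative degrees and
those of a resolution of the dual of `M` in negative degrees. -/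
def spliceRank (r r' : ℕ → ℕ) : ℤ → ℕ
  | Int.ofNat n => r n
  | Int.negSucc n => r' n

/-- Differentials of the complete resolution: the resolution `B` of `M`, followed by the gluing
map `c` and the transpose of the resolution `B'` of the dual of `M`. -/
def splice : ∀ i : ℤ, Matrix (Fin (spliceRank r r' i)) (Fin (spliceRank r r' (i + 1))) R
  | Int.ofNat n => B n
  | Int.negSucc 0 => c
  | Int.negSucc (n + 1) => (B' n).transpose

/-- Ranks of the free resolution of the Auslander transpose. -/
def trRank (r r' : ℕ → ℕ) : ℕ → ℕ
  | 0 => r 1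
  | 1 => r 0
  | n + 2 => r' n

/-- Differentials of the free resolution of the Auslander transpose: the dual of the negative half
of the complete resolution, starting from the dual of the presentation of `M`. -/
def trRes : ∀ n : ℕ, Matrix (Fin (trRank r r' n)) (Fin (trRank r r' (n + 1))) R
  | 0 => (B 0).transpose
  | 1 => c.transpose
  | n + 2 => B' n

theorem ex_splice_ofNat (N : Type) [AddCommGroup N] [Module R N] (n : ℕ) :
    Ex (splice B B' c) N (Int.ofNat n) ↔
      ∀ v : Fin (r (n + 1)) → N, act (B n) v = 0 → ∃ w, act (B (n + 1)) w = v := Iff.rfl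

theorem ex_splice_negSucc (N : Type) [AddCommGroup N] [Module R N] : ∀ n : ℕ,
    Ex (splice B B' c) N (Int.negSucc n) ↔
      ∀ v : Fin (trRank r r' (n + 1)) → N, act (trRes B B' c (n + 1)).transpose v = 0 →
        ∃ w, act (trRes B B' c n).transpose w = v
  | 0 => Iff.rfl
  | 1 => Iff.rfl
  | _ + 2 => Iff.rfl

section Reflexive

variable {M : Type} [AddCommGroup M] [Module R M]
  (ε : (Fin (r 0) → R) →ₗ[R] M) (hε : Function.Surjective ε)
  (h0 : Function.Exact (act (N := R) (B 0)) ε)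
  (hB : ∀ n, Function.Exact (act (N := R) (B (n + 1))) (act (N := R) (B n)))
  (ε' : (Fin (r' 0) → R) →ₗ[R] Module.Dual R M) (hε' : Function.Surjective ε')
  (h0' : Function.Exact (act (N := R) (B' 0)) ε')
  (hB' : ∀ n, Function.Exact (act (N := R) (B' (n + 1))) (act (N := R) (B' n)))

/-- The matrix of `R^(r 0) → M → Hom(M*, R) → R^(r' 0)`, where `ε'` maps `R^(r' 0)` onto the dual
`M*`. -/
def gluing : Matrix (Fin (r' 0)) (Fin (r 0)) R :=
  Matrix.of fun j i => ε' (Pi.single j 1) (ε (Pi.single i 1))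

theorem act_gluing (t : Fin (r 0) → R) (j : Fin (r' 0)) :
    act (gluing ε ε') t j = ε' (Pi.single j 1) (ε t) := by
  conv_rhs => rw [pi_eq_sum_univ' t]
  simp [act_apply, gluing, mul_comm, Pi.single]

theorem act_gluing_transpose (y : Fin (r' 0) → R) (i : Fin (r 0)) :
    act (gluing ε ε').transpose y i = ε' y (ε (Pi.single i 1)) := by
  conv_rhs => rw [pi_eq_sum_univ' y]
  simp [act_apply, gluing, mul_comm, Pi.single]

include h0 in
theorem gluing_mul : gluing ε ε' * B 0 = 0 :=
  mul_eq_zero_of_act fun v => by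
    ext j
    rw [act_gluing, h0.apply_apply_eq_zero, map_zero, Pi.zero_apply]

include h0' in
theorem gluing_transpose_mul : (gluing ε ε').transpose * B' 0 = 0 :=
  mul_eq_zero_of_act fun v => by
    ext j
    rw [act_gluing_transpose, h0'.apply_apply_eq_zero, LinearMap.zero_apply, Pi.zero_apply]

include h0 h0' hB hB' in
theorem splice_mul : ∀ i, splice B B' (gluing ε ε') i * splice B B' (gluing ε ε') (i + 1) = 0
  | Int.ofNat n => mul_eq_zero_of_act fun v => (hB n).apply_apply_eq_zero v
  | Int.negSucc 0 => gluing_mul B ε h0 ε'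
  | Int.negSucc 1 => by
    have := congrArg Matrix.transpose (gluing_transpose_mul B' ε ε' h0')
    rw [Matrix.transpose_mul, Matrix.transpose_transpose, Matrix.transpose_zero] at this
    exact this
  | Int.negSucc (n + 2) => by
    have : B' n * B' (n + 1) = 0 := mul_eq_zero_of_act fun v => (hB' n).apply_apply_eq_zero v
    have := congrArg Matrix.transpose this
    rw [Matrix.transpose_mul, Matrix.transpose_zero] at this
    exact this

include hε h0 hB hε' h0' hB' in
/-- The spliced complex is acyclic. Injectivity and surjectivity of the biduality map give
exactness at the two spots next to the gluing map, and `Ext^i(M*, R) = 0` gives it further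
down. -/
theorem ex_splice (hM : IsTotallyReflexive R M) : ∀ i, Ex (splice B B' (gluing ε ε')) R i
  | Int.ofNat n => fun v => (hB n v).1
  | Int.negSucc 0 => fun v hv => by
    refine (h0 v).1 (hM.1.1 (LinearMap.ext fun φ => ?_))
    obtain ⟨y, rfl⟩ := hε' φ
    have hv : act (gluing ε ε') v = 0 := hv
    have : LinearMap.applyₗ (ε v) ∘ₗ ε' = 0 := by
      ext j
      simpa using (act_gluing ε ε' v j).symm.trans (congrFun hv j)
    simpa using LinearMap.congr_fun this y
  | Int.negSucc 1 => by
    intro (v : Fin (r' 0) → R) (hv : act (B' 0).transpose v = 0)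
    obtain ⟨Ψ, hΨ⟩ := exists_factor ε' hε' (Module.piEquiv _ R R v) (fun x hx => by
      obtain ⟨y, rfl⟩ := (h0' x).1 hx
      rw [← LinearMap.comp_apply, piEquiv_comp_act, hv, map_zero, LinearMap.zero_apply])
    obtain ⟨m, rfl⟩ := hM.1.2 Ψ
    obtain ⟨t, rfl⟩ := hε m
    refine ⟨t, funext fun j => ?_⟩
    refine (act_gluing ε ε' t j).trans ((hΨ _).trans (piEquiv_single v j))
  | Int.negSucc (n + 2) =>
    (ext_iff_act B' ε' hε' h0' hB' R n).1 (hM.2.2 _ (Nat.le_add_left _ _))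

include hε h0 hε' h0' hB' in
/-- Left exactness of duality makes the dual of the presentation of `M`, continued by the
resolution of `M*`, a resolution of the Auslander transpose. -/
theorem exact_trRes : ∀ n, Function.Exact (act (N := R) (trRes B B' (gluing ε ε') (n + 1)))
    (act (N := R) (trRes B B' (gluing ε ε') n))
  | 0 => fun (y : Fin (r 0) → R) => by
    change act (B 0).transpose y = 0 ↔ ∃ z, act (gluing ε ε').transpose z = y
    constructor
    · intro hy
      obtain ⟨φ, hφ⟩ := exists_factor ε hε (Module.piEquiv _ R R y) (fun x hx => by
        obtain ⟨u, rfl⟩ := (h0 x).1 hx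
        rw [← LinearMap.comp_apply, piEquiv_comp_act, hy, map_zero, LinearMap.zero_apply])
      obtain ⟨z, rfl⟩ := hε' φ
      refine ⟨z, funext fun i => ?_⟩
      exact (act_gluing_transpose ε ε' z i).trans ((hφ _).trans (piEquiv_single y i))
    · rintro ⟨z, rfl⟩
      rw [← act_mul, ← Matrix.transpose_mul, gluing_mul B ε h0, Matrix.transpose_zero, act_zero]
  | 1 => fun z => by
    change act (gluing ε ε').transpose z = 0 ↔ ∃ w, act (B' 0) w = z
    constructor
    · intro hz
      refine (h0' z).1 (LinearMap.ext fun m => ?_)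
      obtain ⟨t, rfl⟩ := hε m
      have : ε' z ∘ₗ ε = 0 := by
        ext i
        simpa using (act_gluing_transpose ε ε' z i).symm.trans (congrFun hz i)
      exact LinearMap.congr_fun this t
    · rintro ⟨w, rfl⟩
      rw [← act_mul, gluing_transpose_mul B' ε ε' h0', act_zero]
  | n + 2 => hB' n

include hε h0 hB hε' h0' hB' in
/-- Both conditions say that the complete resolution tensored with `N` is exact in one half:
`Ext` of the transpose sees the negative degrees and `Tor` the nonnegative ones. Rigidity
identifies them. -/
theorem ext_iff_tor (hR : Rigid R) (hM : IsTotallyReflexive R M) {X : Type} [AddCommGroup X]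
    [Module R X] (δ : (Fin (r 1) → R) →ₗ[R] X) (hδ : Function.Surjective δ)
    (h0δ : Function.Exact (act (N := R) (B 0).transpose) δ)
    (N : Type) [AddCommGroup N] [Module R N] :
    (∀ i : ℕ, 1 ≤ i → Subsingleton (ExtM R X N i)) ↔
      (∀ i : ℕ, 1 ≤ i → Subsingleton (TorM R M N i)) := by
  have hext : ∀ n, Subsingleton (ExtM R X N (n + 1)) ↔
      Ex (splice B B' (gluing ε ε')) N (Int.negSucc n) := fun n =>
    (ext_iff_act (trRes B B' (gluing ε ε')) δ hδ h0δ
      (exact_trRes B B' ε hε h0 ε' hε' h0' hB') N n).trans (ex_splice_negSucc B B' _ N n).symm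
  have htor : ∀ n, Subsingleton (TorM R M N (n + 1)) ↔
      Ex (splice B B' (gluing ε ε')) N (Int.ofNat n) := fun n =>
    (tor_iff_act B ε hε h0 hB N n).trans (ex_splice_ofNat B B' _ N n).symm
  have hrigid := hR (fun i => Fin (spliceRank r r' i)) (splice B B' (gluing ε ε'))
    (splice_mul B B' ε h0 hB ε' h0' hB') (ex_splice B B' ε hε h0 hB ε' hε' h0' hB' hM) N
  constructor
  · intro H i hi
    obtain ⟨n, rfl⟩ := Nat.exists_eq_add_of_le' hi
    refine (htor n).2 ((hrigid (-1)).2 (fun i hi => ?_) _)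
    obtain ⟨k, rfl⟩ := Int.eq_negSucc_of_lt_zero (show i < 0 by omega)
    exact (hext k).1 (H _ (Nat.le_add_left _ _))
  · intro H i hi
    obtain ⟨n, rfl⟩ := Nat.exists_eq_add_of_le' hi
    refine (hext n).2 ((hrigid 0).1 (fun i hi => ?_) _)
    obtain ⟨k, rfl⟩ := Int.eq_ofNat_of_zero_le hi
    exact (htor k).1 (H _ (Nat.le_add_left _ _))

end Reflexive

end Splice

/-! ### Free resolutions over a Noetherian ring -/

section Resolution

variable {R : Type} [CommRing R]

/-- A linear map between finite free modules. -/
structure FreeMap (R : Type) [CommRing R] where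
  target : ℕ
  source : ℕ
  map : (Fin source → R) →ₗ[R] (Fin target → R)

variable [IsNoetherianRing R]

theorem exists_cover_ker {n : ℕ} {X : Type} [AddCommGroup X] [Module R X]
    (f : (Fin n → R) →ₗ[R] X) :
    ∃ (m : ℕ) (d : (Fin m → R) →ₗ[R] (Fin n → R)), Function.Exact d f := by
  obtain ⟨m, p, hp⟩ := Module.Finite.exists_fin' R (LinearMap.ker f)
  refine ⟨m, (LinearMap.ker f).subtype ∘ₗ p, fun x => ⟨fun hx => ?_, ?_⟩⟩
  · obtain ⟨y, hy⟩ := hp ⟨x, hx⟩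
    exact ⟨y, congrArg Subtype.val hy⟩
  · rintro ⟨y, rfl⟩
    exact (p y).2

/-- A map from a finite free module onto the kernel of `d`. -/
noncomputable def FreeMap.next (d : FreeMap R) : FreeMap R :=
  ⟨d.source, (exists_cover_ker d.map).choose, (exists_cover_ker d.map).choose_spec.choose⟩

/-- The maps of a free resolution of the cokernel of `d` that starts with `d` itself. -/
noncomputable def FreeMap.iter (d : FreeMap R) : ℕ → FreeMap R
  | 0 => d
  | n + 1 => (d.iter n).next

/-- Ranks of the free resolution that starts with `d`; the first two are those of the target and
the source of `d`, by definition. -/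
noncomputable def FreeMap.rank (d : FreeMap R) (n : ℕ) : ℕ := (d.iter n).target

/-- Matrices of the free resolution that starts with `d`. -/
noncomputable def FreeMap.res (d : FreeMap R) (n : ℕ) :
    Matrix (Fin (d.rank n)) (Fin (d.rank (n + 1))) R :=
  LinearMap.toMatrix' (d.iter n).map

theorem FreeMap.act_res (d : FreeMap R) (n : ℕ) : act (N := R) (d.res n) = (d.iter n).map :=
  LinearMap.ext fun v => act_toMatrix' (d.iter n).map v

theorem FreeMap.exact_res (d : FreeMap R) (n : ℕ) :
    Function.Exact (act (N := R) (d.res (n + 1))) (act (N := R) (d.res n)) := by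
  rw [FreeMap.act_res, FreeMap.act_res]
  exact (exists_cover_ker (d.iter n).map).choose_spec.choose_spec

end Resolution

/-- The equivalence over any Noetherian ring with the rigidity property. -/
theorem main (R : Type) [CommRing R] [IsNoetherianRing R] (hR : Rigid R)
    (M N : Type) [AddCommGroup M] [Module R M] [AddCommGroup N] [Module R N]
    [Module.Finite R M] (hM : IsTotallyReflexive R M)
    (a b : ℕ) (d : (Fin b → R) →ₗ[R] (Fin a → R)) (ε : (Fin a → R) →ₗ[R] M)
    (hsurj : Function.Surjective ε) (hker : LinearMap.ker ε = LinearMap.range d) :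
    (∀ i : ℕ, 1 ≤ i → Subsingleton
        (ExtM R (Module.Dual R (Fin b → R) ⧸ LinearMap.range d.dualMap) N i)) ↔
      (∀ i : ℕ, 1 ≤ i → Subsingleton (TorM R M N i)) := by
  obtain ⟨a', ε', hε'⟩ := Module.Finite.exists_fin' R (Module.Dual R M)
  obtain ⟨b', d', h0'⟩ := exists_cover_ker ε'
  let D : FreeMap R := ⟨a, b, d⟩
  let D' : FreeMap R := ⟨a', b', d'⟩
  have hD : act (N := R) (D.res 0) = d := D.act_res 0
  have hD' : act (N := R) (D'.res 0) = d' := D'.act_res 0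
  have h0 : Function.Exact d ε := LinearMap.exact_iff.2 hker
  have hδ : Function.Exact (act (N := R) (D.res 0).transpose)
      ((LinearMap.range d.dualMap).mkQ ∘ₗ (Module.piEquiv (Fin b) R R).toLinearMap) := by
    intro (y : Fin b → R)
    change (LinearMap.range d.dualMap).mkQ (Module.piEquiv (Fin b) R R y) = 0 ↔ _
    rw [Submodule.mkQ_apply, Submodule.Quotient.mk_eq_zero]
    constructor
    · rintro ⟨φ, hφ⟩
      obtain ⟨w, rfl⟩ := (Module.piEquiv (Fin a) R R).surjective φ
      refine ⟨w, (Module.piEquiv (Fin b) R R).injective ?_⟩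
      refine (piEquiv_comp_act (D.res 0) w).symm.trans ?_
      rw [hD]
      exact hφ
    · rintro ⟨w, rfl⟩
      refine ⟨Module.piEquiv (Fin a) R R w, ?_⟩
      refine Eq.trans ?_ (piEquiv_comp_act (D.res 0) w)
      rw [hD]
      rfl
  refine ext_iff_tor D.res D'.res ε hsurj ?_ D.exact_res ε' hε' ?_ D'.exact_res hR hM
    ((LinearMap.range d.dualMap).mkQ ∘ₗ (Module.piEquiv (Fin b) R R).toLinearMap)
    ((Submodule.mkQ_surjective _).comp (Module.piEquiv (Fin b) R R).surjective) hδ N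
  · rw [hD]
    exact h0
  · rw [hD']
    exact h0'

end CIRigid

/-- Let `R` be a local complete intersection, `M` a totally reflexive
finitely generated `R`-module and `N` a finitely generated `R`-module. For any finite free
presentation `R^b → R^a → M → 0`, with Auslander transpose
`Tr M = coker(Hom(R^a,R) → Hom(R^b,R))`: `Ext^i(Tr M, N) = 0` for all `i ≥ 1` iff
`Tor_i(M,N) = 0` for all `i ≥ 1`. -/
theorem stmt10 (R : Type) [CommRing R] [IsLocalRing R]
    (S : Type) [CommRing S] [IsLocalRing S] (hS : IsRegularLocal S)
    (xs : List S) (hreg : RingTheory.Sequence.IsRegular S xs)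
    (hx2 : ∀ x ∈ xs, x ∈ (IsLocalRing.maximalIdeal S) ^ 2)
    (e : (S ⧸ Ideal.span {x | x ∈ xs}) ≃+* R)
    (M N : Type) [AddCommGroup M] [Module R M] [AddCommGroup N] [Module R N]
    [Module.Finite R M] [Module.Finite R N]
    (hM : IsTotallyReflexive R M)
    (a b : ℕ) (d : (Fin b → R) →ₗ[R] (Fin a → R)) (ε : (Fin a → R) →ₗ[R] M)
    (hsurj : Function.Surjective ε) (hker : LinearMap.ker ε = LinearMap.range d) :
    (∀ i : ℕ, 1 ≤ i → Subsingleton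
        (ExtM R (Module.Dual R (Fin b → R) ⧸ LinearMap.range d.dualMap) N i)) ↔
      (∀ i : ℕ, 1 ≤ i → Subsingleton (TorM R M N i)) := by
  obtain ⟨hnoeth, ys, hys, hysm⟩ := hS
  let φ : S →+* R := e.toRingHom.comp (Ideal.Quotient.mk (Ideal.span {x | x ∈ xs}))
  have hφ : Function.Surjective φ := e.surjective.comp Ideal.Quotient.mk_surjective
  have hφker : RingHom.ker φ = Ideal.ofList (xs.take xs.length) := by
    rw [List.take_length]
    ext s
    rw [RingHom.mem_ker]
    change e (Ideal.Quotient.mk _ s) = 0 ↔ _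
    rw [map_eq_zero_iff e e.injective, Ideal.Quotient.eq_zero_iff_mem]
  have hnoeth' : IsNoetherianRing R := isNoetherianRing_of_surjective S R φ hφ
  have hrigid : CIRigid.Rigid R := CIRigid.rigid_of_completeIntersection
    (CIRigid.rigid_of_isRegularLocal hys.toIsWeaklyRegular hysm) hreg.toIsWeaklyRegular
    (fun x hx => Ideal.pow_le_self two_ne_zero (hx2 x hx)) xs.length le_rfl R φ hφ hφker
  exact CIRigid.main R hrigid M N hM a b d ε hsurj hker
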